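/- Let r₀ > 0 and let φ : (0,r₀) → (0,∞) be nondecreasing. Let a > 0 and γ > β > 0. Then there exist positive numbers ε = ε(a,γ,β) and c = c(a,γ,β) with the following property: if b ≥ 0 and φ(ρ) ≤ a[(ρ/r)^γ + ε] φ(r) + b r^β for all 0 < ρ ≤ r < r₀, then also φ(ρ) ≤ c[(ρ/r)^β φ(r) + b ρ^β] for all 0 < ρ < r < r₀. -/

import Mathlib

open Set

/-- iteration Lemma 2.4, cf. Han–Lin: let `φ : (0,r₀) → (0,∞)` be
nondecreasing, `a > 0` and `γ > β > 0`. There exist `ε = ε(a,γ,β) > 0` and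
`c = c(a,γ,β) > 0` such that whenever `b ≥ 0` and
`φ(ρ) ≤ a[(ρ/r)^γ + ε] φ(r) + b r^β` for all `0 < ρ ≤ r < r₀`, then also
`φ(ρ) ≤ c[(ρ/r)^β φ(r) + b ρ^β]` for all `0 < ρ < r < r₀`. -/
theorem iteration_lemma (a γ β : ℝ) (ha : 0 < a) (hβ : 0 < β) (hγβ : β < γ) :
    ∃ ε : ℝ, 0 < ε ∧ ∃ c : ℝ, 0 < c ∧
      ∀ (r₀ : ℝ), 0 < r₀ →
      ∀ φ : ℝ → ℝ, (∀ r ∈ Ioo (0 : ℝ) r₀, 0 < φ r) → MonotoneOn φ (Ioo (0 : ℝ) r₀) →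
      ∀ b : ℝ, 0 ≤ b →
        (∀ ρ r : ℝ, 0 < ρ → ρ ≤ r → r < r₀ →
          φ ρ ≤ a * ((ρ / r) ^ γ + ε) * φ r + b * r ^ β) →
        ∀ ρ r : ℝ, 0 < ρ → ρ < r → r < r₀ →
          φ ρ ≤ c * ((ρ / r) ^ β * φ r + b * ρ ^ β) := by
  obtain ⟨τ, hτ0, hτ1, hτ⟩ : ∃ τ : ℝ, 0 < τ ∧ τ < 1 ∧ a * τ ^ (γ - β) ≤ 1 / 4 := by
    have hd : 0 < γ - β := by linarith
    refine ⟨min (1 / 2) ((1 / (4 * a)) ^ (1 / (γ - β))), by positivity,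
      lt_of_le_of_lt (min_le_left _ _) (by norm_num), ?_⟩
    have h1 : (min (1 / 2) ((1 / (4 * a)) ^ (1 / (γ - β)))) ^ (γ - β) ≤ 1 / (4 * a) := by
      calc _ ≤ ((1 / (4 * a)) ^ (1 / (γ - β))) ^ (γ - β) :=
            Real.rpow_le_rpow (by positivity) (min_le_right _ _) hd.le
        _ = 1 / (4 * a) := by
            rw [← Real.rpow_mul (by positivity), one_div_mul_cancel hd.ne', Real.rpow_one]
    calc _ ≤ a * (1 / (4 * a)) := mul_le_mul_of_nonneg_left h1 ha.le
      _ = 1 / 4 := by field_simp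
  have hT0 : 0 < τ ^ β := Real.rpow_pos_of_pos hτ0 β
  have hT : a * (τ ^ γ + τ ^ γ) ≤ τ ^ β / 2 := by
    have h : τ ^ γ = τ ^ (γ - β) * τ ^ β := by rw [← Real.rpow_add hτ0]; congr 1; ring
    rw [h]
    nlinarith
  refine ⟨τ ^ γ, by positivity, (1 + 2 / τ ^ β) / τ ^ β, by positivity, ?_⟩
  intro r₀ _ φ hpos hmono b hb H ρ r hρ hρr hr
  have hr0 : 0 < r := hρ.trans hρr
  have hpow : ∀ n : ℕ, (τ ^ n) ^ β = (τ ^ β) ^ n := fun n => by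
    rw [← Real.rpow_natCast, ← Real.rpow_natCast, ← Real.rpow_mul hτ0.le,
      ← Real.rpow_mul hτ0.le, mul_comm]
  have hle : ∀ n : ℕ, τ ^ n * r ≤ r := fun n =>
    mul_le_of_le_one_left hr0.le (pow_le_one₀ hτ0.le hτ1.le)
  have key : ∀ n : ℕ, φ (τ ^ n * r) ≤ (τ ^ β) ^ n * (φ r + 2 / τ ^ β * (b * r ^ β)) := by
    intro n
    induction n with
    | zero =>
      have : 0 ≤ 2 / τ ^ β * (b * r ^ β) := by positivity
      simpa using this
    | succ n ih =>
      have hs : 0 < τ ^ n * r := by positivity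
      have hsr := (hle n).trans_lt hr
      have h1 := H (τ * (τ ^ n * r)) (τ ^ n * r) (by positivity)
        (mul_le_of_le_one_left hs.le hτ1.le) hsr
      rw [mul_div_assoc, div_self hs.ne', mul_one, Real.mul_rpow (by positivity) hr0.le,
        hpow] at h1
      have h2 := mul_le_mul_of_nonneg_right hT (hpos _ ⟨hs, hsr⟩).le
      have h3 := mul_le_mul_of_nonneg_left ih (by positivity : 0 ≤ τ ^ β / 2)
      have h4 : 0 ≤ τ ^ β * (τ ^ β) ^ n * φ r :=
        mul_nonneg (by positivity) (hpos r ⟨hr0, hr⟩).le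
      have e : τ ^ (n + 1) * r = τ * (τ ^ n * r) := by ring
      rw [e]
      have e1 : τ ^ β / 2 * ((τ ^ β) ^ n * (φ r + 2 / τ ^ β * (b * r ^ β)))
          = τ ^ β * (τ ^ β) ^ n * φ r / 2 + (τ ^ β) ^ n * (b * r ^ β) := by
        field_simp
      have e2 : (τ ^ β) ^ (n + 1) * (φ r + 2 / τ ^ β * (b * r ^ β))
          = τ ^ β * (τ ^ β) ^ n * φ r + 2 * ((τ ^ β) ^ n * (b * r ^ β)) := by
        rw [pow_succ]
        field_simp
      rw [e2]
      rw [e1] at h3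
      linarith
  obtain ⟨n, hn1, hn2⟩ := exists_nat_pow_near_of_lt_one (div_pos hρ hr0)
    ((div_le_one hr0).2 hρr.le) hτ0 hτ1
  have hx : (τ ^ β) ^ n ≤ (ρ / r) ^ β / τ ^ β := by
    rw [le_div_iff₀ hT0, ← pow_succ, ← hpow]
    exact Real.rpow_le_rpow (by positivity) hn1.le hβ.le
  have hφ := (hpos r ⟨hr0, hr⟩).le
  have hB : 0 ≤ b * r ^ β := by positivity
  have hK : 0 < 2 / τ ^ β := by positivity
  have hρβ : ρ ^ β = (ρ / r) ^ β * r ^ β := by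
    rw [← Real.mul_rpow (by positivity) hr0.le, div_mul_cancel₀ _ hr0.ne']
  calc φ ρ ≤ φ (τ ^ n * r) :=
        hmono ⟨hρ, hρr.trans hr⟩ ⟨by positivity, (hle n).trans_lt hr⟩
          ((div_le_iff₀ hr0).1 hn2)
    _ ≤ _ := key n
    _ ≤ (ρ / r) ^ β / τ ^ β * (φ r + 2 / τ ^ β * (b * r ^ β)) :=
        mul_le_mul_of_nonneg_right hx (by positivity)
    _ ≤ (ρ / r) ^ β / τ ^ β * ((1 + 2 / τ ^ β) * (φ r + b * r ^ β)) := by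
        refine mul_le_mul_of_nonneg_left ?_ (by positivity)
        nlinarith [mul_nonneg hK.le hφ]
    _ = _ := by rw [hρβ]; ring
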